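/- Assume condition (A2) holds with limit I ∈ (0,∞) and that ϱ_α ∈ (0,1) satisfies ϱ_α → 0 and |log ϱ_α|/|log α| → 0 as α → 0; write Δ(α) = Δ(α,ϱ_α) and let T_α = T((1−α)/(ϱ_α α)) be the SR procedure. Then (i) for every ν ≥ 0, inf_{τ∈Δ(α)} R_ν(τ) / R_ν(T_α) → 1 as α → 0, and inf_{τ∈Δ(α)} sup_{ν≥0} R_ν(τ) / sup_{ν≥0} R_ν(T_α) → 1, with inf_{τ∈Δ(α)} R_ν(τ) ~ R_ν(T_α) ~ |log α|/I and inf_{τ∈Δ(α)} sup_{ν≥0} R_ν(τ) ~ sup_{ν≥0} R_ν(T_α) ~ |log α|/I; and (ii) if in addition k*_α satisfies k*_α → ∞ and |log α| + k*_α·log(1−ϱ_α) → +∞, then for every fixed ν ≥ 0, inf_{τ∈Δ(α)} R*_ν(τ) / R*_ν(T_α) → 1, inf_{τ∈Δ(α)} max_{0≤ν≤k*_α} R*_ν(τ) / max_{0≤ν≤k*_α} R*_ν(T_α) → 1, and both quantities are asymptotically equivalent to |log α|/I as α → 0. -/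

import Mathlib

/-!
All four pairs (optimal risk, risk of `T_α`) are trapped between `(1 - o(1)) |log α| / I` and
`(1 + o(1)) |log α| / I`; `tendsto_of_bounds` turns this into the asymptotic equivalences.

*Lower bound* (`eventually_le_risk`). Every `τ ∈ Δ(α)` has `P∞(τ ≤ k) ≤ α (1 - ϱ)^{-k}`
(`Pinf_le_of_mem_Delta`). Take a horizon `K ≈ c |log α| / I` with `c < 1`. The event
`{τ ≤ ν + K}` belongs to `F (ν + K)`, so changing measure from `P_ν` to `P∞` at time `ν + K`
costs a factor `exp ((I + ε) K)`, except on an event whose probability is a term of the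
convergent series in (A2). Since `ϱ_α → 0`, the product `exp ((I + ε) K) α (1 - ϱ)^{-ν-K}` tends
to `0`; hence `P_ν(τ > ν + K) → 1` uniformly in `τ`, and `R_ν(τ) ≥ (1 - o(1)) K`. The minimax and
conditional risks are bounded below by the pointwise risk at a fixed change point.

*Upper bound* (`eventually_risk_SR_le`). As `R_n ≥ exp (Z_n^ν)` for `n > ν`, the SR procedure is
still running `n ≥ log h / (I - ε)` steps after the change only on a deviation event of (A2), so
`R_ν(T) ≤ log h / (I - ε) + O(1)` uniformly in `ν` (`risk_SR_le`), and `log h ~ |log α|`.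

*Membership* (`SR_mem_Delta`). `P∞(T(h) ≤ k) ≤ k / h`, whence the weighted false-alarm probability
of `T_α` is at most `α (1 - ϱ) / (1 - α)`. This is at most `α` once `α ≤ ϱ_α`, which holds for small
`α`. Membership also gives `P_ν(T_α > ν) → 1` uniformly over `ν ≤ k*_α`, which transfers the upper
bound to the conditional risks (`eventually_crisk_SR_le`).
-/

open MeasureTheory Filter Set Topology ENNReal

noncomputable section

/-- A general change-point model: a filtration `F` on `Ω`, probability measures `P k`
(the change occurs immediately after time `k`) and `Pinf` (no change), such that `P k`
and `Pinf` agree on `F n` for `n ≤ k` and are mutually absolutely continuous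
on `F n` for `n > k`. -/
structure ChangePointModel (Ω : Type) [m0 : MeasurableSpace Ω] where
  F : ℕ → MeasurableSpace Ω
  F_le : ∀ n, F n ≤ m0
  F_mono : Monotone F
  F_zero : F 0 = ⊥
  P : ℕ → Measure Ω
  Pinf : Measure Ω
  P_prob : ∀ k, IsProbabilityMeasure (P k)
  Pinf_prob : IsProbabilityMeasure Pinf
  agree : ∀ k n : ℕ, n ≤ k → (P k).trim (F_le n) = Pinf.trim (F_le n)
  ac₁ : ∀ k n : ℕ, k < n → (P k).trim (F_le n) ≪ Pinf.trim (F_le n)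
  ac₂ : ∀ k n : ℕ, k < n → Pinf.trim (F_le n) ≪ (P k).trim (F_le n)

namespace ChangePointModel

variable {Ω : Type} [m0 : MeasurableSpace Ω] (M : ChangePointModel Ω)

/-- The log-likelihood ratio `Z n k = log (d(P k|F n)/d(P∞|F n))`. -/
def Z (n k : ℕ) (ω : Ω) : ℝ :=
  Real.log ((((M.P k).trim (M.F_le n)).rnDeriv (M.Pinf.trim (M.F_le n))) ω).toReal

/-- A detection procedure: a stopping time of the filtration `F` with values in `{1,2,…,∞}`. -/
def IsDetection (τ : Ω → ℕ∞) : Prop :=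
  (∀ ω, 1 ≤ τ ω) ∧ ∀ n : ℕ, MeasurableSet[M.F n] {ω | τ ω ≤ (n : ℕ∞)}

/-- The detection risk `R_ν(τ) = E_ν (τ - ν)⁺`. -/
def risk (ν : ℕ) (τ : Ω → ℕ∞) : ℝ≥0∞ :=
  ∫⁻ ω, ((τ ω - (ν : ℕ∞) : ℕ∞) : ℝ≥0∞) ∂(M.P ν)

/-- The conditional detection risk `R*_ν(τ) = E_ν (τ - ν | τ > ν)`. -/
def crisk (ν : ℕ) (τ : Ω → ℕ∞) : ℝ≥0∞ :=
  M.risk ν τ / M.P ν {ω | (ν : ℕ∞) < τ ω}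

/-- The moment-`ℓ` detection risk `E_ν ((τ - ν)⁺)^ℓ`. -/
def riskPow (ℓ : ℝ) (ν : ℕ) (τ : Ω → ℕ∞) : ℝ≥0∞ :=
  ∫⁻ ω, ((τ ω - (ν : ℕ∞) : ℕ∞) : ℝ≥0∞) ^ ℓ ∂(M.P ν)

/-- The conditional moment-`ℓ` detection risk `E_ν ((τ - ν)^ℓ | τ > ν)`. -/
def criskPow (ℓ : ℝ) (ν : ℕ) (τ : Ω → ℕ∞) : ℝ≥0∞ :=
  M.riskPow ℓ ν τ / M.P ν {ω | (ν : ℕ∞) < τ ω}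

/-- The Bayesian class `Δ(α,ϱ)` of detection procedures with weighted probability of
false alarm at most `α` (geometric prior with parameter `ϱ`). -/
def Delta (α ϱ : ℝ) : Set (Ω → ℕ∞) :=
  {τ | M.IsDetection τ ∧
    ∑' k : ℕ, ENNReal.ofReal (ϱ * (1 - ϱ) ^ k) * M.Pinf {ω | τ ω ≤ (k : ℕ∞)}
      ≤ ENNReal.ofReal α}

/-- The Shiryaev–Roberts statistic `R_n = ∑_{k=1}^n exp (Z_n^{k-1})`. -/
def SRstat (n : ℕ) (ω : Ω) : ℝ :=
  ∑ k ∈ Finset.range n, Real.exp (M.Z n k ω)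

/-- The Shiryaev–Roberts procedure with threshold `h`. -/
def SR (h : ℝ) (ω : Ω) : ℕ∞ :=
  sInf {n : ℕ∞ | ∃ m : ℕ, n = (m : ℕ∞) ∧ 1 ≤ m ∧ h ≤ M.SRstat m ω}

/-- Condition (A1): `Z (k+n) k / n → I` almost surely under `P k`, for every `k`. -/
def CondA1 (I : ℝ) : Prop :=
  ∀ k : ℕ, ∀ᵐ ω ∂(M.P k),
    Tendsto (fun n : ℕ => M.Z (k + n) k ω / n) atTop (𝓝 I)

/-- Condition (A2): uniform complete convergence of `Z (k+n) k / n` to `I`. -/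
def CondA2 (I : ℝ) : Prop :=
  ∀ ε : ℝ, 0 < ε →
    (∑' n : ℕ, ⨆ k : ℕ,
      M.P k {ω | ε < |M.Z (k + (n + 1)) k ω / (n + 1) - I|}) < ⊤

/-- Uniform `r`-complete convergence of `Z (k+n) k / n` to `I`. -/
def CondAr (r I : ℝ) : Prop :=
  ∀ ε : ℝ, 0 < ε →
    (∑' n : ℕ, ENNReal.ofReal ((n + 1 : ℝ) ^ (r - 1)) * ⨆ k : ℕ,
      M.P k {ω | ε < |M.Z (k + (n + 1)) k ω / (n + 1) - I|}) < ⊤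

/-- The class `H(β,k*,m*)` : local probability of a false alarm in windows of
length `m*` starting at `1 ≤ k ≤ k* - m*` is at most `β`. -/
def Hclass (β : ℝ) (kstar mstar : ℕ) : Set (Ω → ℕ∞) :=
  {τ | M.IsDetection τ ∧ ∀ k : ℕ, 1 ≤ k → k + mstar ≤ kstar →
    M.Pinf {ω | (k : ℕ∞) ≤ τ ω ∧ τ ω < ((k + mstar : ℕ) : ℕ∞)} ≤ ENNReal.ofReal β}

/-- The class `H*(β,k*,m*)` : local conditional probability of a false alarm
`P_∞(τ < k+m* | τ > k)` is at most `β` for `1 ≤ k ≤ k* - m*`. -/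
def HclassStar (β : ℝ) (kstar mstar : ℕ) : Set (Ω → ℕ∞) :=
  {τ | M.IsDetection τ ∧ ∀ k : ℕ, 1 ≤ k → k + mstar ≤ kstar →
    M.Pinf {ω | (k : ℕ∞) < τ ω ∧ τ ω < ((k + mstar : ℕ) : ℕ∞)}
        / M.Pinf {ω | (k : ℕ∞) < τ ω} ≤ ENNReal.ofReal β}

end ChangePointModel

/-- `ϱ_{1,β} = 1/(1+|log β|)`. -/
def rho1 (β : ℝ) : ℝ := 1 / (1 + |Real.log β|)

/-- `ϱ_{2,β} = ϱ_{1,β}/(1+|log|log β||)`. -/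
def rho2 (β : ℝ) : ℝ := rho1 β / (1 + |Real.log (|Real.log β|)|)

/-- `α₁(β,m*) = β + (1-ϱ_{1,β})^{m*+1}`. -/
def alpha1 (β : ℝ) (m : ℕ) : ℝ := β + (1 - rho1 β) ^ (m + 1)

/-- `α₂(β,k*) = β (1-ϱ_{2,β})^{k*}`. -/
def alpha2 (β : ℝ) (k : ℕ) : ℝ := β * (1 - rho2 β) ^ k

/-- `α₃(β,k*) = β (1-ϱ_{2,β})^{k*} / (1+β)`. -/
def alpha3 (β : ℝ) (k : ℕ) : ℝ := β * (1 - rho2 β) ^ k / (1 + β)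

/-! ### Change of measure -/

namespace ChangePointModel

variable {Ω : Type} [m0 : MeasurableSpace Ω] (M : ChangePointModel Ω)

instance (k : ℕ) : IsProbabilityMeasure (M.P k) := M.P_prob k

instance : IsProbabilityMeasure M.Pinf := M.Pinf_prob

lemma measurable_Z (n k : ℕ) : Measurable[M.F n] (M.Z n k) :=
  Real.measurable_log.comp (Measure.measurable_rnDeriv _ _).ennreal_toReal

lemma measurable_SRstat (n : ℕ) : Measurable[M.F n] (M.SRstat n) := by
  unfold SRstat
  exact Finset.measurable_fun_sum _ fun k _ => Real.measurable_exp.comp (M.measurable_Z n k)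

/-- Change of measure on `F n`: although `Z` is defined through the junk-valued `Real.log` and
`toReal`, `exp (Z n k)` is a density of `P k` with respect to `P∞` on `F n`, for every `n`
and `k`, because the Radon–Nikodym derivative is almost surely positive and finite. -/
lemma setLIntegral_exp_Z (n k : ℕ) {A : Set Ω} (hA : MeasurableSet[M.F n] A) :
    ∫⁻ ω in A, ENNReal.ofReal (Real.exp (M.Z n k ω)) ∂M.Pinf = M.P k A := by
  have hac : (M.P k).trim (M.F_le n) ≪ M.Pinf.trim (M.F_le n) := by
    rcases le_or_gt n k with h | h
    · rw [M.agree k n h]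
    · exact M.ac₁ k n h
  have hac' : M.Pinf.trim (M.F_le n) ≪ (M.P k).trim (M.F_le n) := by
    rcases le_or_gt n k with h | h
    · rw [M.agree k n h]
    · exact M.ac₂ k n h
  have hmeas : Measurable[M.F n] fun ω => ENNReal.ofReal (Real.exp (M.Z n k ω)) :=
    (Real.measurable_exp.comp (M.measurable_Z n k)).ennreal_ofReal
  rw [← lintegral_trim (M.F_le n) hmeas, ← restrict_trim (M.F_le n) _ hA,
    ← trim_measurableSet_eq (M.F_le n) hA, ← Measure.setLIntegral_rnDeriv hac A]
  refine setLIntegral_congr_fun_ae hA ?_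
  filter_upwards [Measure.rnDeriv_pos' hac',
    Measure.rnDeriv_lt_top ((M.P k).trim (M.F_le n)) (M.Pinf.trim (M.F_le n))] with ω h1 h2 _
  rw [Z, Real.exp_log (ENNReal.toReal_pos h1.ne' h2.ne), ENNReal.ofReal_toReal h2.ne]

lemma P_eq_Pinf {n k : ℕ} (h : n ≤ k) {A : Set Ω} (hA : MeasurableSet[M.F n] A) :
    M.P k A = M.Pinf A := by
  rw [← trim_measurableSet_eq (M.F_le n) hA, M.agree k n h, trim_measurableSet_eq (M.F_le n) hA]

/-- `P k` of an `F n`-event is controlled by its `P∞`-probability on the part where the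
log-likelihood ratio is at most `b`. -/
lemma P_le_exp_mul_add (n k : ℕ) (b : ℝ) {A : Set Ω} (hA : MeasurableSet[M.F n] A) :
    M.P k A ≤ ENNReal.ofReal (Real.exp b) * M.Pinf A + M.P k {ω | b < M.Z n k ω} := by
  have hB : MeasurableSet[M.F n] {ω | M.Z n k ω ≤ b} :=
    measurableSet_le (M.measurable_Z n k) measurable_const
  calc M.P k A ≤ M.P k ((A ∩ {ω | M.Z n k ω ≤ b}) ∪ {ω | b < M.Z n k ω}) := by
        refine measure_mono fun ω hω => ?_
        rcases le_or_gt (M.Z n k ω) b with h | h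
        · exact Or.inl ⟨hω, h⟩
        · exact Or.inr h
    _ ≤ M.P k (A ∩ {ω | M.Z n k ω ≤ b}) + M.P k {ω | b < M.Z n k ω} := measure_union_le _ _
    _ ≤ _ := by
        gcongr
        rw [← M.setLIntegral_exp_Z n k (hA.inter hB)]
        calc _ ≤ ∫⁻ ω in A ∩ {ω | M.Z n k ω ≤ b}, ENNReal.ofReal (Real.exp b) ∂M.Pinf := by
              refine setLIntegral_mono' (M.F_le n _ (hA.inter hB)) fun ω hω => ?_
              gcongr
              exact hω.2
          _ = ENNReal.ofReal (Real.exp b) * M.Pinf (A ∩ {ω | M.Z n k ω ≤ b}) :=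
              setLIntegral_const _ _
          _ ≤ _ := by gcongr; exact inter_subset_left

/-! ### The Bayesian class -/

lemma Pinf_le_of_mem_Delta {α ϱ : ℝ} (h0 : 0 < ϱ) (h1 : ϱ < 1)
    {τ : Ω → ℕ∞} (hτ : τ ∈ M.Delta α ϱ) (k : ℕ) :
    M.Pinf {ω | τ ω ≤ (k : ℕ∞)} ≤ ENNReal.ofReal (α / (1 - ϱ) ^ k) := by
  have h1' : 0 < 1 - ϱ := by linarith
  have hs : HasSum (fun j : ℕ => ϱ * (1 - ϱ) ^ (j + k)) ((1 - ϱ) ^ k) := by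
    have := (hasSum_geometric_of_lt_one h1'.le (by linarith)).mul_left (ϱ * (1 - ϱ) ^ k)
    rw [_root_.sub_sub_cancel, mul_right_comm, mul_inv_cancel₀ h0.ne', one_mul] at this
    refine this.congr_fun fun j => ?_
    ring
  have key : ENNReal.ofReal ((1 - ϱ) ^ k) * M.Pinf {ω | τ ω ≤ (k : ℕ∞)} ≤ ENNReal.ofReal α := by
    rw [← hs.tsum_eq, ENNReal.ofReal_tsum_of_nonneg (fun j => by positivity) hs.summable,
      ← ENNReal.tsum_mul_right]
    refine le_trans (ENNReal.tsum_le_tsum fun j => ?_) (le_trans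
      (ENNReal.tsum_comp_le_tsum_of_injective (add_left_injective k) fun j : ℕ =>
        ENNReal.ofReal (ϱ * (1 - ϱ) ^ j) * M.Pinf {ω | τ ω ≤ (j : ℕ∞)}) hτ.2)
    show _ ≤ ENNReal.ofReal (ϱ * (1 - ϱ) ^ (j + k)) * M.Pinf {ω | τ ω ≤ ((j + k : ℕ) : ℕ∞)}
    gcongr
    exact Nat.le_add_left k j
  rw [ENNReal.ofReal_div_of_pos (by positivity), ENNReal.le_div_iff_mul_le
    (Or.inl (by positivity)) (Or.inl ENNReal.ofReal_ne_top), mul_comm]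
  exact key

/-! ### The Shiryaev–Roberts procedure -/

lemma SR_le_iff (h : ℝ) (ω : Ω) (n : ℕ) :
    M.SR h ω ≤ (n : ℕ∞) ↔ ∃ m : ℕ, 1 ≤ m ∧ m ≤ n ∧ h ≤ M.SRstat m ω := by
  constructor
  · intro hle
    have hne : {n : ℕ∞ | ∃ m : ℕ, n = (m : ℕ∞) ∧ 1 ≤ m ∧ h ≤ M.SRstat m ω}.Nonempty := by
      by_contra hcon
      rw [SR, Set.not_nonempty_iff_eq_empty.1 hcon, sInf_empty] at hle
      exact absurd hle (by simp)
    obtain ⟨m, hm, h1, h2⟩ := csInf_mem hne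
    refine ⟨m, h1, ?_, h2⟩
    have : M.SR h ω = m := hm
    rw [this] at hle
    exact_mod_cast hle
  · rintro ⟨m, h1, h2, h3⟩
    exact le_trans (sInf_le ⟨m, rfl, h1, h3⟩) (by exact_mod_cast h2)

lemma isDetection_SR (h : ℝ) : M.IsDetection (M.SR h) := by
  refine ⟨fun ω => le_sInf ?_, fun n => ?_⟩
  · rintro _ ⟨m, rfl, h1, -⟩
    exact_mod_cast h1
  · have : {ω | M.SR h ω ≤ (n : ℕ∞)} =
        ⋃ m : ℕ, ⋃ (_ : 1 ≤ m ∧ m ≤ n), {ω | h ≤ M.SRstat m ω} := by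
      ext ω
      simp [M.SR_le_iff, and_assoc]
    rw [this]
    refine MeasurableSet.iUnion fun m => MeasurableSet.iUnion fun hm => ?_
    exact M.F_mono hm.2 _ (measurableSet_le measurable_const (M.measurable_SRstat m))

/-- The false-alarm bound `P∞(T(h) ≤ k) ≤ k / h`. On `{T = n}` one has `h ≤ R_n`, and the
change of measure turns `E∞[R_n; T = n]` into `∑_{j<n} P_j(T = n)`; summing over `n ≤ k` for
each of the `k` values of `j` gives at most `k`. -/
lemma Pinf_SR_le (h : ℝ) (k : ℕ) :
    ENNReal.ofReal h * M.Pinf {ω | M.SR h ω ≤ (k : ℕ∞)} ≤ k := by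
  have hle := (M.isDetection_SR h).2
  have hD : ∀ n : ℕ, MeasurableSet[M.F n] {ω | M.SR h ω = (n : ℕ∞)} := by
    intro n
    have : {ω | M.SR h ω = (n : ℕ∞)} =
        {ω | M.SR h ω ≤ (n : ℕ∞)} \ ⋃ m : ℕ, ⋃ (_ : m < n), {ω | M.SR h ω ≤ (m : ℕ∞)} := by
      ext ω
      simp only [Set.mem_ofPred_eq, Set.mem_sdiff, mem_iUnion, not_exists, not_le]
      constructor
      · intro he
        refine ⟨he.le, fun m hm => ?_⟩
        rw [he]; exact_mod_cast hm
      · rintro ⟨h1, h2⟩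
        refine le_antisymm h1 ?_
        by_contra hcon
        obtain ⟨m, hm⟩ := ENat.ne_top_iff_exists.1 (ne_top_of_le_ne_top (ENat.natCast_ne_top n) h1)
        rw [← hm] at hcon
        have hmn : m < n := by
          have := not_le.1 hcon
          exact_mod_cast this
        have := h2 m hmn
        rw [← hm] at this
        exact lt_irrefl _ this
    rw [this]
    exact (hle n).diff (MeasurableSet.iUnion fun m => MeasurableSet.iUnion fun hm =>
      M.F_mono hm.le _ (hle m))
  have hdisj : Pairwise (Function.onFun Disjoint fun n : ℕ => {ω | M.SR h ω = (n : ℕ∞)}) := by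
    intro a b hab
    refine Set.disjoint_left.2 fun ω ha hb => hab ?_
    have : (a : ℕ∞) = b := ha.symm.trans hb
    exact_mod_cast this
  have hstep : ∀ n : ℕ, 1 ≤ n → ENNReal.ofReal h * M.Pinf {ω | M.SR h ω = (n : ℕ∞)} ≤
      ∑ j ∈ Finset.range n, M.P j {ω | M.SR h ω = (n : ℕ∞)} := by
    intro n hn
    have hsum : ∑ j ∈ Finset.range n, M.P j {ω | M.SR h ω = (n : ℕ∞)} =
        ∫⁻ ω in {ω | M.SR h ω = (n : ℕ∞)}, ENNReal.ofReal (M.SRstat n ω) ∂M.Pinf := by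
      simp_rw [SRstat, ENNReal.ofReal_sum_of_nonneg (fun j _ => (Real.exp_pos _).le)]
      rw [lintegral_finsetSum]
      · exact Finset.sum_congr rfl fun j _ => (M.setLIntegral_exp_Z n j (hD n)).symm
      · intro j _
        exact (Real.measurable_exp.comp
          ((M.measurable_Z n j).mono (M.F_le n) le_rfl)).ennreal_ofReal
    rw [hsum, ← setLIntegral_const]
    refine setLIntegral_mono' (M.F_le n _ (hD n)) fun ω hω => ENNReal.ofReal_le_ofReal ?_
    obtain ⟨m, h1, h2, h3⟩ := (M.SR_le_iff h ω n).1 (le_of_eq hω)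
    have h4 := (M.SR_le_iff h ω m).2 ⟨m, h1, le_rfl, h3⟩
    rw [show M.SR h ω = n from hω] at h4
    have h5 : n ≤ m := by exact_mod_cast h4
    rwa [le_antisymm h2 h5] at h3
  have hcover : {ω | M.SR h ω ≤ (k : ℕ∞)} ⊆
      ⋃ n ∈ Finset.Icc 1 k, {ω | M.SR h ω = (n : ℕ∞)} := by
    intro ω hω
    obtain ⟨m, hm⟩ := ENat.ne_top_iff_exists.1 (ne_top_of_le_ne_top (ENat.natCast_ne_top k) hω)
    have h1 := (M.isDetection_SR h).1 ω
    have h2 : M.SR h ω ≤ k := hω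
    rw [← hm] at h1 h2
    simp only [mem_iUnion, Finset.mem_Icc]
    exact ⟨m, ⟨by exact_mod_cast h1, by exact_mod_cast h2⟩, hm.symm⟩
  calc ENNReal.ofReal h * M.Pinf {ω | M.SR h ω ≤ (k : ℕ∞)}
      ≤ ENNReal.ofReal h * ∑ n ∈ Finset.Icc 1 k, M.Pinf {ω | M.SR h ω = (n : ℕ∞)} := by
        gcongr
        exact (measure_mono hcover).trans (measure_biUnion_finset_le _ _)
    _ ≤ ∑ n ∈ Finset.Icc 1 k, ∑ j ∈ Finset.range k, M.P j {ω | M.SR h ω = (n : ℕ∞)} := by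
        rw [Finset.mul_sum]
        refine Finset.sum_le_sum fun n hn => (hstep n (Finset.mem_Icc.1 hn).1).trans ?_
        exact Finset.sum_le_sum_of_subset (Finset.range_mono (Finset.mem_Icc.1 hn).2)
    _ = ∑ j ∈ Finset.range k, ∑ n ∈ Finset.Icc 1 k, M.P j {ω | M.SR h ω = (n : ℕ∞)} :=
        Finset.sum_comm
    _ ≤ ∑ j ∈ Finset.range k, 1 := by
        refine Finset.sum_le_sum fun j _ => ?_
        rw [← measure_biUnion_finset (fun a _ b _ hab => hdisj hab)
          (fun n _ => M.F_le n _ (hD n))]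
        exact prob_le_one
    _ = k := by simp

lemma SR_mem_Delta {α ϱ : ℝ} (hα0 : 0 < α) (hα1 : α < 1) (h1 : ϱ < 1) (hle : α ≤ ϱ) :
    M.SR ((1 - α) / (ϱ * α)) ∈ M.Delta α ϱ := by
  refine ⟨M.isDetection_SR _, ?_⟩
  have h0 : 0 < ϱ := by linarith
  have h1' : 0 < 1 - ϱ := by linarith
  have h2 : 0 < 1 - α := by linarith
  set h := (1 - α) / (ϱ * α) with hh
  have hpos : 0 < h := by positivity
  have hs : HasSum (fun k : ℕ => ϱ * (1 - ϱ) ^ k * (k / h)) (ϱ / h * ((1 - ϱ) / ϱ ^ 2)) := by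
    have := (hasSum_coe_mul_geometric_of_norm_lt_one (r := 1 - ϱ)
      (by rw [Real.norm_eq_abs, abs_of_pos h1']; linarith)).mul_left (ϱ / h)
    rw [_root_.sub_sub_cancel] at this
    refine this.congr_fun fun j => ?_
    ring
  calc ∑' k : ℕ, ENNReal.ofReal (ϱ * (1 - ϱ) ^ k) * M.Pinf {ω | M.SR h ω ≤ (k : ℕ∞)}
      ≤ ∑' k : ℕ, ENNReal.ofReal (ϱ * (1 - ϱ) ^ k * (k / h)) := by
        refine ENNReal.tsum_le_tsum fun k => ?_
        rw [ENNReal.ofReal_mul (p := ϱ * (1 - ϱ) ^ k) (by positivity)]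
        refine mul_le_mul' le_rfl ?_
        rw [ENNReal.ofReal_div_of_pos hpos, ENNReal.le_div_iff_mul_le
          (Or.inl (by positivity)) (Or.inl ENNReal.ofReal_ne_top), mul_comm]
        simpa using M.Pinf_SR_le h k
    _ = ENNReal.ofReal (ϱ / h * ((1 - ϱ) / ϱ ^ 2)) := by
        rw [← ENNReal.ofReal_tsum_of_nonneg (fun j => by positivity) hs.summable, hs.tsum_eq]
    _ ≤ ENNReal.ofReal α := by
        refine ENNReal.ofReal_le_ofReal ?_
        have : ϱ / h * ((1 - ϱ) / ϱ ^ 2) = α * ((1 - ϱ) / (1 - α)) := by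
          rw [hh]; field_simp
        rw [this]
        refine mul_le_of_le_one_right hα0.le ?_
        rw [div_le_one h2]; linarith

/-! ### Non-asymptotic risk bounds -/

/-- The uniform deviation probability `sup_k P_k(|Z_{k+n+1}^k / (n+1) - I| > ε)`, the summand
of condition (A2). -/
def dev (I ε : ℝ) (n : ℕ) : ℝ≥0∞ :=
  ⨆ k : ℕ, M.P k {ω | ε < |M.Z (k + (n + 1)) k ω / (n + 1) - I|}

lemma le_risk (ν K : ℕ) {τ : Ω → ℕ∞} (hτ : M.IsDetection τ) :
    (K : ℝ≥0∞) * (1 - M.P ν {ω | τ ω ≤ ((ν + K : ℕ) : ℕ∞)}) ≤ M.risk ν τ := by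
  have hm : MeasurableSet {ω | τ ω ≤ ((ν + K : ℕ) : ℕ∞)} := M.F_le _ _ (hτ.2 _)
  rw [← prob_compl_eq_one_sub hm, ← setLIntegral_const, risk]
  refine le_trans (setLIntegral_mono' hm.compl fun ω hω => ?_) (setLIntegral_le_lintegral _ _)
  have h1 : ((ν + K : ℕ) : ℕ∞) < τ ω := not_le.1 hω
  have h2 : (K : ℕ∞) ≤ τ ω - (ν : ℕ∞) := by
    refine ENat.le_sub_of_add_le_left (ENat.natCast_ne_top ν) ?_
    have := h1.le
    push_cast at this
    exact this
  exact_mod_cast ENat.toENNReal_le.2 h2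

/-- A procedure in the Bayesian class cannot stop before `ν + m + 1` with noticeable
`P ν`-probability, unless the log-likelihood ratio at that time is unusually large. -/
lemma P_stop_le {I ε α ϱ : ℝ} (h0 : 0 < ϱ) (h1 : ϱ < 1) (ν m : ℕ)
    {τ : Ω → ℕ∞} (hτ : τ ∈ M.Delta α ϱ) :
    M.P ν {ω | τ ω ≤ ((ν + (m + 1) : ℕ) : ℕ∞)} ≤
      ENNReal.ofReal (Real.exp ((I + ε) * (m + 1)) * (α / (1 - ϱ) ^ (ν + (m + 1)))) +
        M.dev I ε m := by
  refine (M.P_le_exp_mul_add _ ν ((I + ε) * (m + 1)) (hτ.1.2 _)).trans ?_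
  rw [ENNReal.ofReal_mul (Real.exp_pos _).le]
  refine add_le_add (mul_le_mul' le_rfl (M.Pinf_le_of_mem_Delta h0 h1 hτ _)) ?_
  refine le_trans (measure_mono fun ω hω => ?_)
    (le_iSup (fun k => M.P k {ω | ε < |M.Z (k + (m + 1)) k ω / (m + 1) - I|}) ν)
  have hω' : (I + ε) * (m + 1) < M.Z (ν + (m + 1)) ν ω := hω
  have hpos : (0 : ℝ) < m + 1 := by positivity
  have h2 := (lt_div_iff₀ hpos).2 hω'
  have h3 : ε < M.Z (ν + (m + 1)) ν ω / (m + 1) - I := by linarith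
  exact lt_of_lt_of_le h3 (le_abs_self _)

/-- The SR procedure stops no later than the first `n > ν` with `Z_n^ν ≥ log h`; beyond `N` steps
after the change this fails only on a deviation event, so the expected delay exceeds `N` by at
most the sum of the deviation probabilities, uniformly in `ν`. -/
lemma risk_SR_le {I ε h : ℝ} (hεI : ε < I) {N : ℕ}
    (hN : Real.log h ≤ N * (I - ε)) (ν : ℕ) :
    M.risk ν (M.SR h) ≤ N + 1 + ∑' n, M.dev I ε n := by
  set B : ℕ → Set Ω := fun n => {ω | ε < |M.Z (ν + (n + 1)) ν ω / (n + 1) - I|} with hB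
  have hBm : ∀ n, MeasurableSet (B n) := by
    intro n
    have hZ : Measurable (M.Z (ν + (n + 1)) ν) := (M.measurable_Z _ ν).mono (M.F_le _) le_rfl
    exact measurableSet_lt measurable_const ((hZ.div_const _).sub_const _).abs
  have hin : ∀ ω, ∀ n : ℕ, N ≤ n + 1 → ((ν + (n + 1) : ℕ) : ℕ∞) < M.SR h ω → ω ∈ B n := by
    intro ω n hn hlt
    have h1 : M.SRstat (ν + (n + 1)) ω < h := by
      by_contra hcon
      exact absurd ((M.SR_le_iff h ω (ν + (n + 1))).2
        ⟨ν + (n + 1), by omega, le_rfl, not_lt.1 hcon⟩) (not_le.2 hlt)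
    have h2 : Real.exp (M.Z (ν + (n + 1)) ν ω) ≤ M.SRstat (ν + (n + 1)) ω :=
      Finset.single_le_sum (f := fun k => Real.exp (M.Z (ν + (n + 1)) k ω))
        (fun k _ => (Real.exp_pos _).le) (Finset.mem_range.2 (by omega))
    have h3 : M.Z (ν + (n + 1)) ν ω < Real.log h := by
      rw [← Real.log_exp (M.Z (ν + (n + 1)) ν ω)]
      exact Real.log_lt_log (Real.exp_pos _) (h2.trans_lt h1)
    have hpos : (0 : ℝ) < n + 1 := by positivity
    have h4 : M.Z (ν + (n + 1)) ν ω / (n + 1) < I - ε := by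
      rw [div_lt_iff₀ hpos]
      have : (N : ℝ) ≤ n + 1 := by exact_mod_cast hn
      nlinarith
    show ε < |M.Z (ν + (n + 1)) ν ω / (n + 1) - I|
    exact lt_of_lt_of_le (by linarith) (neg_le_abs _)
  have hpt : ∀ ω, ((M.SR h ω - (ν : ℕ∞) : ℕ∞) : ℝ≥0∞) ≤
      N + 1 + ∑' n, (B n).indicator (fun _ => (1 : ℝ≥0∞)) ω := by
    intro ω
    have hnat : ∀ m : ℕ, (m : ℕ∞) ≤ M.SR h ω - (ν : ℕ∞) →
        (m : ℝ≥0∞) ≤ N + 1 + ∑' n, (B n).indicator (fun _ => (1 : ℝ≥0∞)) ω := by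
      intro m hm
      have hsub : ∀ n ∈ Finset.Ico N (m - 1), ω ∈ B n := by
        intro n hn
        rw [Finset.mem_Ico] at hn
        refine hin ω n (by omega) ?_
        have h1 : ((n + 1 : ℕ) : ℕ∞) < M.SR h ω - (ν : ℕ∞) :=
          lt_of_lt_of_le (by exact_mod_cast (by omega : n + 1 < m)) hm
        have h2 := lt_tsub_iff_left.1 h1
        exact_mod_cast h2
      have hsum : ((m - 1 - N : ℕ) : ℝ≥0∞) ≤
          ∑' n, (B n).indicator (fun _ => (1 : ℝ≥0∞)) ω := by
        refine le_trans (le_of_eq ?_) (ENNReal.sum_le_tsum (Finset.Ico N (m - 1)))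
        rw [Finset.sum_congr rfl fun n hn => Set.indicator_of_mem (hsub n hn) _]
        simp
      refine le_trans ?_ (add_le_add le_rfl hsum)
      exact_mod_cast (by omega : m ≤ N + 1 + (m - 1 - N))
    generalize M.SR h ω - (ν : ℕ∞) = t at hnat ⊢
    induction t using ENat.recTopCoe with
    | top =>
      have : N + 1 + ∑' n, (B n).indicator (fun _ => (1 : ℝ≥0∞)) ω = ⊤ := by
        refine ENNReal.eq_top_of_forall_nnreal_le fun r => ?_
        obtain ⟨m, hm⟩ := exists_nat_ge r
        exact le_trans (by exact_mod_cast hm) (hnat m le_top)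
      rw [this]; exact le_top
    | coe m => simpa using hnat m le_rfl
  calc M.risk ν (M.SR h)
      ≤ ∫⁻ ω, (N + 1 + ∑' n, (B n).indicator (fun _ => (1 : ℝ≥0∞)) ω) ∂(M.P ν) :=
        lintegral_mono hpt
    _ = N + 1 + ∑' n, M.P ν (B n) := by
        rw [lintegral_add_left measurable_const,
          lintegral_tsum fun n => (measurable_const.indicator (hBm n)).aemeasurable]
        simp [hBm]
    _ ≤ N + 1 + ∑' n, M.dev I ε n := by
        gcongr with n
        exact le_iSup (fun k => M.P k {ω | ε < |M.Z (k + (n + 1)) k ω / (n + 1) - I|}) ν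

lemma risk_le_crisk (ν : ℕ) (τ : Ω → ℕ∞) : M.risk ν τ ≤ M.crisk ν τ := by
  unfold crisk
  calc M.risk ν τ = M.risk ν τ / 1 := by simp
    _ ≤ _ := ENNReal.div_le_div_left prob_le_one _

/-! ### Asymptotic risk bounds -/

lemma tendsto_abs_log : Tendsto (fun α : ℝ => |Real.log α|) (𝓝[>] (0 : ℝ)) atTop :=
  tendsto_abs_atBot_atTop.comp Real.tendsto_log_nhdsGT_zero

lemma eventually_Ioo : ∀ᶠ α : ℝ in 𝓝[>] (0 : ℝ), α ∈ Set.Ioo (0 : ℝ) 1 :=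
  Ioo_mem_nhdsGT one_pos

/-- First-order lower bound, valid for all procedures of the Bayesian class simultaneously. -/
lemma eventually_le_risk {I : ℝ} (hI : 0 < I) (hA2 : M.CondA2 I) {ϱ : ℝ → ℝ}
    (hϱmem : ∀ α ∈ Set.Ioo (0 : ℝ) 1, ϱ α ∈ Set.Ioo (0 : ℝ) 1)
    (hϱ0 : Tendsto ϱ (𝓝[>] (0 : ℝ)) (𝓝 0)) (ν : ℕ) {c : ℝ} (hc0 : 0 < c) (hc : c < 1) :
    ∀ᶠ α : ℝ in 𝓝[>] (0 : ℝ), ∀ τ ∈ M.Delta α (ϱ α),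
      ENNReal.ofReal (c * (|Real.log α| / I)) ≤ M.risk ν τ := by
  -- The horizon is `c' |log α| / I`; early stopping has probability at most `2 η`, and
  -- `c' * (1 - 2 η) = c' ^ 2 ≥ c`.
  set c' := (1 + c) / 2 with hc'
  have hc'0 : 0 < c' := by positivity
  have hc'1 : c' < 1 := by rw [hc']; linarith
  set s := I * (1 - c') / 4 with hs
  have hs0 : 0 < s := by
    have : 0 < 1 - c' := by linarith
    rw [hs]; positivity
  set η := (1 - c') / 2 with hη
  have hη0 : 0 < η := by rw [hη]; linarith
  have hdev : Tendsto (fun α : ℝ => M.dev I s ⌊c' * |Real.log α| / I⌋₊) (𝓝[>] (0 : ℝ)) (𝓝 0) := by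
    have h1 : Tendsto (M.dev I s) atTop (𝓝 0) :=
      ENNReal.tendsto_atTop_zero_of_tsum_ne_top (hA2 s hs0).ne
    exact h1.comp (tendsto_nat_floor_atTop.comp
      ((tendsto_abs_log.const_mul_atTop hc'0).atTop_div_const hI))
  have hlog : Tendsto (fun α : ℝ => -Real.log (1 - ϱ α)) (𝓝[>] (0 : ℝ)) (𝓝 0) := by
    have h1 : Tendsto (fun α : ℝ => 1 - ϱ α) (𝓝[>] (0 : ℝ)) (𝓝 1) := by
      simpa using hϱ0.const_sub 1
    simpa using ((Real.continuousAt_log one_ne_zero).tendsto.comp h1).neg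
  have hexp : Tendsto (fun α : ℝ =>
      Real.exp (-((1 - c') / 2 * |Real.log α|) + ((I + s) + s * (ν + 1))))
      (𝓝[>] (0 : ℝ)) (𝓝 0) := by
    refine Real.tendsto_exp_atBot.comp (tendsto_atBot_add_const_right _ _ ?_)
    exact tendsto_neg_atTop_atBot.comp (tendsto_abs_log.const_mul_atTop hη0)
  filter_upwards [eventually_Ioo, hdev.eventually (gt_mem_nhds (ENNReal.ofReal_pos.2 hη0)),
    hlog.eventually (gt_mem_nhds hs0), hexp.eventually (gt_mem_nhds hη0)]
    with α hα hd hl he τ hτ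
  obtain ⟨hr0, hr1⟩ := hϱmem α hα
  set m := ⌊c' * |Real.log α| / I⌋₊ with hm
  set L := |Real.log α| with hL
  have hL' : L = -Real.log α := by
    rw [hL, abs_of_neg (Real.log_neg hα.1 hα.2)]
  have hL0 : 0 ≤ L := abs_nonneg _
  have hm1 : (m : ℝ) * I ≤ c' * L := by
    have : (m : ℝ) ≤ c' * L / I := Nat.floor_le (by positivity)
    rwa [le_div_iff₀ hI] at this
  have hm2 : c' * (L / I) ≤ (m + 1 : ℕ) := by
    have := (Nat.lt_floor_add_one (c' * L / I)).le
    rw [← mul_div_assoc]; push_cast; exact this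
  have hbound : Real.exp ((I + s) * (m + 1)) * (α / (1 - ϱ α) ^ (ν + (m + 1))) ≤ η := by
    refine le_trans ?_ he.le
    have e1 : α / (1 - ϱ α) ^ (ν + (m + 1)) =
        Real.exp (-L + (ν + (m + 1)) * -Real.log (1 - ϱ α)) := by
      have : (1 - ϱ α) ^ (ν + (m + 1)) =
          Real.exp (((ν + (m + 1) : ℕ) : ℝ) * Real.log (1 - ϱ α)) := by
        rw [Real.exp_nat_mul, Real.exp_log (by linarith)]
      rw [this, hL', neg_neg, div_eq_mul_inv, ← Real.exp_neg, Real.exp_add, Real.exp_log hα.1]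
      push_cast; ring_nf
    rw [e1, ← Real.exp_add]
    refine Real.exp_le_exp.2 ?_
    have h1 : ((ν : ℝ) + (m + 1)) * -Real.log (1 - ϱ α) ≤ (ν + (m + 1)) * s := by gcongr
    have h2 : 2 * s * m ≤ (1 - c') / 2 * L := by
      have : 2 * s * m = (1 - c') / 2 * (m * I) := by rw [hs]; ring
      rw [this]
      have h3 : (m : ℝ) * I ≤ L := by nlinarith
      have h4 : 0 ≤ (1 - c') / 2 := by linarith
      gcongr
    nlinarith
  have hP : M.P ν {ω | τ ω ≤ ((ν + (m + 1) : ℕ) : ℕ∞)} ≤ ENNReal.ofReal (2 * η) := by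
    refine (M.P_stop_le (I := I) (ε := s) hr0 hr1 ν m hτ).trans ?_
    rw [two_mul, ENNReal.ofReal_add hη0.le hη0.le]
    exact add_le_add (ENNReal.ofReal_le_ofReal hbound) hd.le
  refine le_trans ?_ (M.le_risk ν (m + 1) hτ.1)
  calc ENNReal.ofReal (c * (L / I))
      ≤ ENNReal.ofReal (((m + 1 : ℕ) : ℝ) * (1 - 2 * η)) := by
        refine ENNReal.ofReal_le_ofReal ?_
        have e : 1 - 2 * η = c' := by rw [hη]; ring
        rw [e]
        have h1 : c ≤ c' * c' := by rw [hc']; nlinarith [sq_nonneg (1 - c)]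
        have h2 : 0 ≤ L / I := by positivity
        nlinarith
    _ ≤ _ := by
        rw [ENNReal.ofReal_mul (by positivity), ENNReal.ofReal_natCast,
          ENNReal.ofReal_sub _ (by positivity), ENNReal.ofReal_one]
        gcongr

/-- First-order upper bound on the risk of the SR procedure, uniform in the change point. -/
lemma eventually_risk_SR_le {I : ℝ} (hI : 0 < I) (hA2 : M.CondA2 I) {ϱ : ℝ → ℝ}
    (hϱmem : ∀ α ∈ Set.Ioo (0 : ℝ) 1, ϱ α ∈ Set.Ioo (0 : ℝ) 1)
    (hϱlog : Tendsto (fun α : ℝ => |Real.log (ϱ α)| / |Real.log α|) (𝓝[>] (0 : ℝ)) (𝓝 0))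
    {c : ℝ} (hc : 1 < c) :
    ∀ᶠ α : ℝ in 𝓝[>] (0 : ℝ), ∀ ν : ℕ,
      M.risk ν (M.SR ((1 - α) / (ϱ α * α))) ≤ ENNReal.ofReal (c * (|Real.log α| / I)) := by
  -- `log h ≤ q |log α|` and the drift is at least `I / q` off deviation events; `q ^ 2 < c`.
  set q := √((1 + c) / 2) with hq
  have hq2 : q ^ 2 = (1 + c) / 2 := Real.sq_sqrt (by linarith)
  have hq1 : 1 < q := by rw [hq, Real.lt_sqrt zero_le_one]; linarith
  set ε := I - I / q with hε
  have hq0 : 0 < q := by linarith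
  have hε0 : 0 < ε := by
    rw [hε, sub_pos, div_lt_iff₀ hq0]; nlinarith
  have hεI : ε < I := by
    have : 0 < I / q := by positivity
    rw [hε]; linarith
  have hS : ∑' n, M.dev I ε n ≠ ⊤ := (hA2 ε hε0).ne
  set S := (∑' n, M.dev I ε n).toReal with hSdef
  filter_upwards [eventually_Ioo, hϱlog.eventually (gt_mem_nhds (sub_pos.2 hq1)),
    tendsto_abs_log.eventually (eventually_ge_atTop ((2 + S) * I * 2 / (c - 1))),
    tendsto_abs_log.eventually (eventually_gt_atTop 0)] with α hα hl hbig hLpos ν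
  obtain ⟨hr0, hr1⟩ := hϱmem α hα
  set L := |Real.log α| with hL
  have hL' : L = -Real.log α := by
    rw [hL, abs_of_neg (Real.log_neg hα.1 hα.2)]
  have hlogh : Real.log ((1 - α) / (ϱ α * α)) ≤ q * L := by
    have h1 : 0 < 1 - α := by linarith [hα.2]
    rw [Real.log_div h1.ne' (mul_pos hr0 hα.1).ne', Real.log_mul hr0.ne' hα.1.ne']
    have h2 : Real.log (1 - α) ≤ 0 := Real.log_nonpos h1.le (by linarith [hα.1])
    rw [div_lt_iff₀ hLpos] at hl
    have h3 := neg_le_abs (Real.log (ϱ α))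
    linarith
  have hN : Real.log ((1 - α) / (ϱ α * α)) ≤ (⌈q ^ 2 * L / I⌉₊ : ℝ) * (I - ε) := by
    refine hlogh.trans ?_
    have h1 := Nat.le_ceil (q ^ 2 * L / I)
    have h2 : I - ε = I / q := by rw [hε]; ring
    rw [h2]
    calc q * L = q ^ 2 * L / I * (I / q) := by field_simp
      _ ≤ _ := by gcongr
  refine (M.risk_SR_le hεI hN ν).trans ?_
  rw [← ENNReal.ofReal_toReal hS, ← hSdef, ← ENNReal.ofReal_natCast, ← ENNReal.ofReal_one,
    ← ENNReal.ofReal_add (by positivity) zero_le_one,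
    ← ENNReal.ofReal_add (by positivity) ENNReal.toReal_nonneg]
  refine ENNReal.ofReal_le_ofReal ?_
  have h1 := (Nat.ceil_lt_add_one (by positivity : 0 ≤ q ^ 2 * L / I)).le
  rw [hq2] at h1 ⊢
  have h2 : 2 + S ≤ (c - 1) / 2 * (L / I) := by
    rw [div_le_iff₀ (by linarith)] at hbig
    rw [← mul_div_assoc, le_div_iff₀ hI]
    linarith
  have h3 : (1 + c) / 2 * L / I = (1 + c) / 2 * (L / I) := by ring
  rw [h3] at h1 ⊢
  nlinarith

lemma eventually_SR_mem_Delta {ϱ : ℝ → ℝ}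
    (hϱmem : ∀ α ∈ Set.Ioo (0 : ℝ) 1, ϱ α ∈ Set.Ioo (0 : ℝ) 1)
    (hϱlog : Tendsto (fun α : ℝ => |Real.log (ϱ α)| / |Real.log α|) (𝓝[>] (0 : ℝ)) (𝓝 0)) :
    ∀ᶠ α : ℝ in 𝓝[>] (0 : ℝ), M.SR ((1 - α) / (ϱ α * α)) ∈ M.Delta α (ϱ α) := by
  filter_upwards [eventually_Ioo, hϱlog.eventually (gt_mem_nhds one_pos),
    tendsto_abs_log.eventually (eventually_gt_atTop 0)] with α hα hl hLpos
  obtain ⟨hr0, hr1⟩ := hϱmem α hα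
  refine M.SR_mem_Delta hα.1 hα.2 hr1 ?_
  rw [div_lt_one hLpos, abs_of_neg (Real.log_neg hr0 hr1),
    abs_of_neg (Real.log_neg hα.1 hα.2)] at hl
  exact (Real.log_le_log_iff hα.1 hr0).1 (by linarith)

/-- Upper bound on the conditional risk of the SR procedure, uniform over `ν ≤ k*`: the
condition on `k*` says exactly that `α (1 - ϱ)^{-k*} → 0`, a bound for `P∞(T ≤ k*)`. -/
lemma eventually_crisk_SR_le {I : ℝ} (hI : 0 < I) (hA2 : M.CondA2 I) {ϱ : ℝ → ℝ}
    (hϱmem : ∀ α ∈ Set.Ioo (0 : ℝ) 1, ϱ α ∈ Set.Ioo (0 : ℝ) 1)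
    (hϱlog : Tendsto (fun α : ℝ => |Real.log (ϱ α)| / |Real.log α|) (𝓝[>] (0 : ℝ)) (𝓝 0))
    {kstar : ℝ → ℕ}
    (hk : Tendsto (fun α : ℝ => |Real.log α| + (kstar α : ℝ) * Real.log (1 - ϱ α))
        (𝓝[>] (0 : ℝ)) atTop)
    {c : ℝ} (hc : 1 < c) :
    ∀ᶠ α : ℝ in 𝓝[>] (0 : ℝ), ∀ ν ≤ kstar α,
      M.crisk ν (M.SR ((1 - α) / (ϱ α * α))) ≤ ENNReal.ofReal (c * (|Real.log α| / I)) := by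
  set c' := (1 + c) / 2 with hc'
  have hc'1 : 1 < c' := by rw [hc']; linarith
  have hc'c : c' < c := by rw [hc']; linarith
  have hc0 : 0 < c := by linarith
  have hη : 0 < 1 - c' / c := by rw [sub_pos, div_lt_one hc0]; exact hc'c
  have hexp := Real.tendsto_exp_atBot.comp (tendsto_neg_atTop_atBot.comp hk)
  filter_upwards [eventually_Ioo, M.eventually_risk_SR_le hI hA2 hϱmem hϱlog hc'1,
    M.eventually_SR_mem_Delta hϱmem hϱlog, hexp.eventually (gt_mem_nhds hη)]
    with α hα hr hmem he ν hν
  obtain ⟨hr0, hr1⟩ := hϱmem α hα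
  set T := M.SR ((1 - α) / (ϱ α * α)) with hT
  have hfalse : M.Pinf {ω | T ω ≤ (ν : ℕ∞)} ≤ ENNReal.ofReal (1 - c' / c) := by
    calc M.Pinf {ω | T ω ≤ (ν : ℕ∞)} ≤ M.Pinf {ω | T ω ≤ (kstar α : ℕ∞)} := by
          gcongr
      _ ≤ ENNReal.ofReal (α / (1 - ϱ α) ^ kstar α) := M.Pinf_le_of_mem_Delta hr0 hr1 hmem _
      _ ≤ _ := by
          refine ENNReal.ofReal_le_ofReal (le_trans (le_of_eq ?_) he.le)
          have : (1 - ϱ α) ^ kstar α = Real.exp ((kstar α : ℝ) * Real.log (1 - ϱ α)) := by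
            rw [Real.exp_nat_mul, Real.exp_log (by linarith)]
          simp only [Function.comp_apply]
          rw [this, abs_of_neg (Real.log_neg hα.1 hα.2), neg_add, neg_neg, Real.exp_add,
            Real.exp_log hα.1, Real.exp_neg, div_eq_mul_inv]
  have hpos : ENNReal.ofReal (c' / c) ≤ M.P ν {ω | (ν : ℕ∞) < T ω} := by
    have hms := hmem.1.2 ν
    have hcompl : {ω | (ν : ℕ∞) < T ω} = {ω | T ω ≤ (ν : ℕ∞)}ᶜ := by
      ext ω; simp
    rw [hcompl, prob_compl_eq_one_sub (M.F_le _ _ hms), M.P_eq_Pinf le_rfl hms]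
    have e : ENNReal.ofReal (c' / c) = 1 - ENNReal.ofReal (1 - c' / c) := by
      rw [← ENNReal.ofReal_one, ← ENNReal.ofReal_sub _ hη.le, _root_.sub_sub_cancel]
    rw [e]
    gcongr
  calc M.crisk ν T ≤ ENNReal.ofReal (c' * (|Real.log α| / I)) / ENNReal.ofReal (c' / c) :=
        ENNReal.div_le_div (hr ν) hpos
    _ = ENNReal.ofReal (c * (|Real.log α| / I)) := by
        rw [← ENNReal.ofReal_div_of_pos (by positivity)]
        congr 1
        field_simp

/-! ### From two-sided bounds to asymptotic equivalence -/

/-- If `A ≤ B` are trapped between `(1 - o(1)) |log α| / I` and `(1 + o(1)) |log α| / I`,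
then `A / B`, `B / (|log α| / I)` and `A / (|log α| / I)` tend to `1`. -/
lemma tendsto_of_bounds {I : ℝ} (hI : 0 < I) {A B : ℝ → ℝ≥0∞}
    (hAB : ∀ᶠ α in 𝓝[>] (0 : ℝ), A α ≤ B α)
    (hA : ∀ c : ℝ, 0 < c → c < 1 →
      ∀ᶠ α in 𝓝[>] (0 : ℝ), ENNReal.ofReal (c * (|Real.log α| / I)) ≤ A α)
    (hB : ∀ c : ℝ, 1 < c →
      ∀ᶠ α in 𝓝[>] (0 : ℝ), B α ≤ ENNReal.ofReal (c * (|Real.log α| / I))) :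
    Tendsto (fun α => A α / B α) (𝓝[>] (0 : ℝ)) (𝓝 1) ∧
    Tendsto (fun α => B α / ENNReal.ofReal (|Real.log α| / I)) (𝓝[>] (0 : ℝ)) (𝓝 1) ∧
    Tendsto (fun α => A α / ENNReal.ofReal (|Real.log α| / I)) (𝓝[>] (0 : ℝ)) (𝓝 1) := by
  have hpos : ∀ᶠ α in 𝓝[>] (0 : ℝ), 0 < |Real.log α| / I := by
    filter_upwards [tendsto_abs_log.eventually (eventually_gt_atTop 0)] with α h
    positivity
  have hlow : ∀ a' < (1 : ℝ≥0∞), ∀ᶠ α in 𝓝[>] (0 : ℝ),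
      a' < A α / ENNReal.ofReal (|Real.log α| / I) := by
    intro a' ha'
    obtain ⟨b, hab, hb1⟩ := exists_between ha'
    have hbt : b ≠ ⊤ := (hb1.trans ENNReal.one_lt_top).ne
    have hb0 : b ≠ 0 := (zero_le.trans_lt hab).ne'
    filter_upwards [hpos, hA b.toReal (ENNReal.toReal_pos hb0 hbt)
      (by simpa using (ENNReal.toReal_lt_toReal hbt ENNReal.one_ne_top).2 hb1)] with α hp h
    refine hab.trans_le ?_
    rw [ENNReal.le_div_iff_mul_le (Or.inl (by simpa using hp)) (Or.inl ENNReal.ofReal_ne_top)]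
    rwa [ENNReal.ofReal_mul ENNReal.toReal_nonneg, ENNReal.ofReal_toReal hbt] at h
  have hupp : ∀ a' > (1 : ℝ≥0∞), ∀ᶠ α in 𝓝[>] (0 : ℝ),
      B α / ENNReal.ofReal (|Real.log α| / I) < a' := by
    intro a' ha'
    obtain ⟨b, hb1, hab⟩ := exists_between ha'
    have hbt : b ≠ ⊤ := (hab.trans_le le_top).ne
    filter_upwards [hpos, hB b.toReal
      (by simpa using (ENNReal.toReal_lt_toReal ENNReal.one_ne_top hbt).2 hb1)] with α hp h
    refine lt_of_le_of_lt ?_ hab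
    refine ENNReal.div_le_of_le_mul ?_
    rwa [ENNReal.ofReal_mul ENNReal.toReal_nonneg, ENNReal.ofReal_toReal hbt] at h
  have hle : ∀ᶠ α in 𝓝[>] (0 : ℝ), A α / ENNReal.ofReal (|Real.log α| / I) ≤
      B α / ENNReal.ofReal (|Real.log α| / I) := by
    filter_upwards [hAB] with α h
    gcongr
  have tA : Tendsto (fun α => A α / ENNReal.ofReal (|Real.log α| / I)) (𝓝[>] (0 : ℝ)) (𝓝 1) := by
    refine tendsto_order.2 ⟨hlow, fun a' ha' => ?_⟩
    filter_upwards [hupp a' ha', hle] with α h1 h2 using h2.trans_lt h1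
  have tB : Tendsto (fun α => B α / ENNReal.ofReal (|Real.log α| / I)) (𝓝[>] (0 : ℝ)) (𝓝 1) := by
    refine tendsto_order.2 ⟨fun a' ha' => ?_, hupp⟩
    filter_upwards [hlow a' ha', hle] with α h1 h2 using h1.trans_le h2
  refine ⟨?_, tB, tA⟩
  have h := ENNReal.Tendsto.div tA (Or.inl one_ne_zero) tB (Or.inl ENNReal.one_ne_top)
  rw [ENNReal.div_self one_ne_zero ENNReal.one_ne_top] at h
  refine h.congr' ?_
  filter_upwards [hpos] with α hp
  simp only [div_eq_mul_inv (b := ENNReal.ofReal (|Real.log α| / I))]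
  exact ENNReal.mul_div_mul_right _ _ (ENNReal.inv_ne_zero.2 ENNReal.ofReal_ne_top)
    (ENNReal.inv_ne_top.2 (by simpa using hp))

end ChangePointModel

/-- Under condition (A2) and `ϱ_α → 0`, `|log ϱ_α|/|log α| → 0`, the SR
procedure `T_α = T((1-α)/(ϱ_α α))` is first-order asymptotically uniformly pointwise optimal
and minimax in the class `Δ(α) = Δ(α,ϱ_α)`: the ratios of the optimal risks to the risks of
`T_α` tend to `1`, and all these risks are asymptotically equivalent to `|log α|/I`; the same
holds for the conditional risks (pointwise, and maximally over `0 ≤ ν ≤ k*_α`) whenever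
`k*_α → ∞` and `|log α| + k*_α log(1-ϱ_α) → +∞`. -/
theorem statement3
    {Ω : Type} [m0 : MeasurableSpace Ω] (M : ChangePointModel Ω)
    (I : ℝ) (hI : 0 < I) (hA2 : M.CondA2 I)
    (ϱ : ℝ → ℝ) (hϱmem : ∀ α ∈ Set.Ioo (0 : ℝ) 1, ϱ α ∈ Set.Ioo (0 : ℝ) 1)
    (hϱ0 : Tendsto ϱ (𝓝[>] (0 : ℝ)) (𝓝 0))
    (hϱlog : Tendsto (fun α : ℝ => |Real.log (ϱ α)| / |Real.log α|) (𝓝[>] (0 : ℝ)) (𝓝 0)) :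
    (∀ ν : ℕ,
      Tendsto (fun α : ℝ =>
        (⨅ τ ∈ M.Delta α (ϱ α), M.risk ν τ) / M.risk ν (M.SR ((1 - α) / (ϱ α * α))))
        (𝓝[>] (0 : ℝ)) (𝓝 1)) ∧
    (Tendsto (fun α : ℝ =>
        (⨅ τ ∈ M.Delta α (ϱ α), ⨆ ν : ℕ, M.risk ν τ)
          / (⨆ ν : ℕ, M.risk ν (M.SR ((1 - α) / (ϱ α * α)))))
        (𝓝[>] (0 : ℝ)) (𝓝 1)) ∧
    (∀ ν : ℕ,
      Tendsto (fun α : ℝ =>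
        M.risk ν (M.SR ((1 - α) / (ϱ α * α))) / ENNReal.ofReal (|Real.log α| / I))
        (𝓝[>] (0 : ℝ)) (𝓝 1)) ∧
    (∀ ν : ℕ,
      Tendsto (fun α : ℝ =>
        (⨅ τ ∈ M.Delta α (ϱ α), M.risk ν τ) / ENNReal.ofReal (|Real.log α| / I))
        (𝓝[>] (0 : ℝ)) (𝓝 1)) ∧
    (Tendsto (fun α : ℝ =>
        (⨆ ν : ℕ, M.risk ν (M.SR ((1 - α) / (ϱ α * α)))) / ENNReal.ofReal (|Real.log α| / I))
        (𝓝[>] (0 : ℝ)) (𝓝 1)) ∧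
    (Tendsto (fun α : ℝ =>
        (⨅ τ ∈ M.Delta α (ϱ α), ⨆ ν : ℕ, M.risk ν τ) / ENNReal.ofReal (|Real.log α| / I))
        (𝓝[>] (0 : ℝ)) (𝓝 1)) ∧
    (∀ kstar : ℝ → ℕ,
      Tendsto kstar (𝓝[>] (0 : ℝ)) atTop →
      Tendsto (fun α : ℝ => |Real.log α| + (kstar α : ℝ) * Real.log (1 - ϱ α))
        (𝓝[>] (0 : ℝ)) atTop →
      (∀ ν : ℕ,
        Tendsto (fun α : ℝ =>
          (⨅ τ ∈ M.Delta α (ϱ α), M.crisk ν τ) / M.crisk ν (M.SR ((1 - α) / (ϱ α * α))))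
          (𝓝[>] (0 : ℝ)) (𝓝 1)) ∧
      (Tendsto (fun α : ℝ =>
          (⨅ τ ∈ M.Delta α (ϱ α), ⨆ ν ∈ Set.Iic (kstar α), M.crisk ν τ)
            / (⨆ ν ∈ Set.Iic (kstar α), M.crisk ν (M.SR ((1 - α) / (ϱ α * α)))))
          (𝓝[>] (0 : ℝ)) (𝓝 1)) ∧
      (∀ ν : ℕ,
        Tendsto (fun α : ℝ =>
          M.crisk ν (M.SR ((1 - α) / (ϱ α * α))) / ENNReal.ofReal (|Real.log α| / I))
          (𝓝[>] (0 : ℝ)) (𝓝 1)) ∧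
      (∀ ν : ℕ,
        Tendsto (fun α : ℝ =>
          (⨅ τ ∈ M.Delta α (ϱ α), M.crisk ν τ) / ENNReal.ofReal (|Real.log α| / I))
          (𝓝[>] (0 : ℝ)) (𝓝 1)) ∧
      (Tendsto (fun α : ℝ =>
          (⨆ ν ∈ Set.Iic (kstar α), M.crisk ν (M.SR ((1 - α) / (ϱ α * α))))
            / ENNReal.ofReal (|Real.log α| / I))
          (𝓝[>] (0 : ℝ)) (𝓝 1)) ∧
      (Tendsto (fun α : ℝ =>
          (⨅ τ ∈ M.Delta α (ϱ α), ⨆ ν ∈ Set.Iic (kstar α), M.crisk ν τ)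
            / ENNReal.ofReal (|Real.log α| / I))
          (𝓝[>] (0 : ℝ)) (𝓝 1))) := by
  have hmem := M.eventually_SR_mem_Delta hϱmem hϱlog
  have hLB := fun (ν : ℕ) (c : ℝ) (h0 : 0 < c) (h1 : c < 1) =>
    M.eventually_le_risk hI hA2 hϱmem hϱ0 ν h0 h1
  have hUB := fun (c : ℝ) (h1 : 1 < c) => M.eventually_risk_SR_le hI hA2 hϱmem hϱlog h1
  have t1 := fun ν : ℕ => ChangePointModel.tendsto_of_bounds hI
    (A := fun α => ⨅ τ ∈ M.Delta α (ϱ α), M.risk ν τ)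
    (B := fun α => M.risk ν (M.SR ((1 - α) / (ϱ α * α))))
    (hmem.mono fun α h => iInf₂_le _ h)
    (fun c h0 h1 => (hLB ν c h0 h1).mono fun α h => le_iInf₂ h)
    (fun c h1 => (hUB c h1).mono fun α h => h ν)
  have t2 := ChangePointModel.tendsto_of_bounds hI
    (A := fun α => ⨅ τ ∈ M.Delta α (ϱ α), ⨆ ν : ℕ, M.risk ν τ)
    (B := fun α => ⨆ ν : ℕ, M.risk ν (M.SR ((1 - α) / (ϱ α * α))))
    (hmem.mono fun α h => iInf₂_le _ h)
    (fun c h0 h1 => (hLB 0 c h0 h1).mono fun α h => le_iInf₂ fun τ hτ =>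
      (h τ hτ).trans (le_iSup (fun ν => M.risk ν τ) 0))
    (fun c h1 => (hUB c h1).mono fun α h => iSup_le h)
  refine ⟨fun ν => (t1 ν).1, t2.1, fun ν => (t1 ν).2.1, fun ν => (t1 ν).2.2, t2.2.1, t2.2.2, ?_⟩
  intro kstar hk1 hk2
  have hUBc := fun (c : ℝ) (h1 : 1 < c) =>
    M.eventually_crisk_SR_le hI hA2 hϱmem hϱlog hk2 h1
  have t3 := fun ν : ℕ => ChangePointModel.tendsto_of_bounds hI
    (A := fun α => ⨅ τ ∈ M.Delta α (ϱ α), M.crisk ν τ)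
    (B := fun α => M.crisk ν (M.SR ((1 - α) / (ϱ α * α))))
    (hmem.mono fun α h => iInf₂_le _ h)
    (fun c h0 h1 => (hLB ν c h0 h1).mono fun α h => le_iInf₂ fun τ hτ =>
      (h τ hτ).trans (M.risk_le_crisk ν τ))
    (fun c h1 => ((hUBc c h1).and (hk1.eventually_ge_atTop ν)).mono fun α h => h.1 ν h.2)
  have t4 := ChangePointModel.tendsto_of_bounds hI
    (A := fun α => ⨅ τ ∈ M.Delta α (ϱ α), ⨆ ν ∈ Set.Iic (kstar α), M.crisk ν τ)
    (B := fun α => ⨆ ν ∈ Set.Iic (kstar α), M.crisk ν (M.SR ((1 - α) / (ϱ α * α))))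
    (hmem.mono fun α h => iInf₂_le _ h)
    (fun c h0 h1 => (hLB 0 c h0 h1).mono fun α h => le_iInf₂ fun τ hτ =>
      ((h τ hτ).trans (M.risk_le_crisk 0 τ)).trans
        (le_iSup₂ (f := fun ν (_ : ν ∈ Set.Iic (kstar α)) => M.crisk ν τ) 0
          (Set.mem_Iic.2 (Nat.zero_le _))))
    (fun c h1 => (hUBc c h1).mono fun α h => iSup₂_le h)
  exact ⟨fun ν => (t3 ν).1, t4.1, fun ν => (t3 ν).2.1, fun ν => (t3 ν).2.2, t4.2.1, t4.2.2⟩
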